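/- For every rational number α with 0 < α < 1, wt(1 − α) = −wt(α). -/

import Mathlib

/-- `cf [a₀, a₁, …, aₙ]` is the continued fraction
`a₀ + 1/(a₁ + 1/(a₂ + ⋯ + 1/aₙ))`. -/
def cf : List ℕ → ℚ
  | [] => 0
  | [a] => (a : ℚ)
  | a :: t => (a : ℚ) + 1 / cf t

/-- The alternating sum `a₀ - a₁ + a₂ - ⋯` of a list. -/
def altSum : List ℕ → ℤ
  | [] => 0
  | a :: t => (a : ℤ) - altSum t

/-- The weight of the continued fraction expansion `[a₀, a₁, …, aₙ]`:
`a₀ - a₁ + a₂ - ⋯ + (-1)ⁿ aₙ` if `n` is even, and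
`a₀ - a₁ + a₂ - ⋯ + (-1)ⁿ aₙ + 2` if `n` is odd.  For a positive rational `α`,
`wt(α)` is this common value for any such expansion of `α`. -/
def wtExp (a₀ : ℕ) (t : List ℕ) : ℤ :=
  altSum (a₀ :: t) + (if Even t.length then 0 else 2)

def auxS (l : List ℕ) : ℤ := altSum l + (if Even l.length then 2 else 0)

theorem auxS_single (a : ℕ) : auxS [a] = a := by simp [auxS, altSum]

theorem auxS_cons (a : ℕ) (t : List ℕ) : auxS (a :: t) = a + 2 - auxS t := by
  simp only [auxS, altSum, List.length_cons, Nat.even_add_one]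
  split_ifs <;> first | ring | contradiction

theorem wtExp_eq (t : List ℕ) : wtExp 0 t = 2 - auxS t := by
  simp only [auxS, wtExp, altSum]
  split_ifs <;> push_cast <;> ring

theorem cf_single (a : ℕ) : cf [a] = a := by simp [cf]

theorem cf_cons (a b : ℕ) (t : List ℕ) : cf (a :: b :: t) = a + 1 / cf (b :: t) := by
  simp [cf]

theorem one_le_cf (l : List ℕ) : ∀ a, (∀ x ∈ a :: l, 0 < x) → 1 ≤ cf (a :: l) := by
  induction l with
  | nil =>
    intro a h
    rw [cf_single]
    exact_mod_cast h a (by simp)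
  | cons b t ih =>
    intro a h
    rw [cf_cons]
    have h1 := ih b (fun x hx => h x (List.mem_cons_of_mem _ hx))
    have h2 : (1 : ℚ) ≤ a := by exact_mod_cast h a (by simp)
    have : 0 < 1 / cf (b :: t) := by positivity
    linarith

theorem auxS_of_cf_one (a : ℕ) (l : List ℕ) (h : ∀ x ∈ a :: l, 0 < x)
    (h1 : cf (a :: l) = 1) : auxS (a :: l) = 1 := by
  cases l with
  | nil =>
    rw [cf_single] at h1
    rw [auxS_single]
    exact_mod_cast h1
  | cons b t =>
    rw [cf_cons] at h1
    have h3 := one_le_cf t b (fun x hx => h x (List.mem_cons_of_mem _ hx))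
    have h2 : (1 : ℚ) ≤ a := by exact_mod_cast h a (by simp)
    have : 0 < 1 / cf (b :: t) := by positivity
    linarith

theorem int_case (a b : ℕ) (y : ℚ) (hy : 1 ≤ y) (h : (a : ℚ) = b + 1 / y) :
    a = b + 1 ∧ y = 1 := by
  have h1 : 0 < 1 / y := by positivity
  have h2 : 1 / y ≤ 1 := by rw [div_le_one (by linarith)]; exact hy
  have h3 : (b : ℚ) < a := by linarith
  have h4 : (a : ℚ) ≤ b + 1 := by linarith
  have h5 : a = b + 1 := by
    have h3' : b < a := by exact_mod_cast h3
    have h4' : a ≤ b + 1 := by exact_mod_cast h4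
    omega
  refine ⟨h5, ?_⟩
  subst h5
  push_cast at h
  have : 1 / y = 1 := by linarith
  field_simp at this
  linarith

theorem auxS_unique (l : List ℕ) : ∀ (a b : ℕ) (m : List ℕ), (∀ x ∈ a :: l, 0 < x) →
    (∀ x ∈ b :: m, 0 < x) → cf (a :: l) = cf (b :: m) → auxS (a :: l) = auxS (b :: m) := by
  induction l with
  | nil =>
    intro a b m hl hm h
    cases m with
    | nil =>
      rw [cf_single, cf_single] at h
      rw [auxS_single, auxS_single]
      exact_mod_cast h
    | cons c t =>
      rw [cf_single, cf_cons] at h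
      have hm' : ∀ x ∈ c :: t, 0 < x := fun x hx => hm x (List.mem_cons_of_mem _ hx)
      obtain ⟨h1, h2⟩ := int_case a b _ (one_le_cf t c hm') h
      rw [auxS_single, auxS_cons, auxS_of_cf_one c t hm' h2, h1]
      push_cast
      ring
  | cons d s ih =>
    intro a b m hl hm h
    have hl' : ∀ x ∈ d :: s, 0 < x := fun x hx => hl x (List.mem_cons_of_mem _ hx)
    cases m with
    | nil =>
      rw [cf_single, cf_cons] at h
      obtain ⟨h1, h2⟩ := int_case b a _ (one_le_cf s d hl') h.symm
      rw [auxS_single, auxS_cons, auxS_of_cf_one d s hl' h2, h1]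
      push_cast
      ring
    | cons c t =>
      have hm' : ∀ x ∈ c :: t, 0 < x := fun x hx => hm x (List.mem_cons_of_mem _ hx)
      rw [cf_cons, cf_cons] at h
      have hx := one_le_cf s d hl'
      have hy := one_le_cf t c hm'
      have x1 : 0 < 1 / cf (d :: s) := by positivity
      have x2 : 1 / cf (d :: s) ≤ 1 := by rw [div_le_one (by linarith)]; exact hx
      have y1 : 0 < 1 / cf (c :: t) := by positivity
      have y2 : 1 / cf (c :: t) ≤ 1 := by rw [div_le_one (by linarith)]; exact hy
      have e1 : (a : ℚ) < b + 1 := by linarith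
      have e2 : (b : ℚ) < a + 1 := by linarith
      have e3 : a = b := by
        have e1' : a < b + 1 := by exact_mod_cast e1
        have e2' : b < a + 1 := by exact_mod_cast e2
        omega
      subst e3
      have e4 : 1 / cf (d :: s) = 1 / cf (c :: t) := by linarith
      have e5 : cf (d :: s) = cf (c :: t) := by simpa using e4
      rw [auxS_cons, auxS_cons a, ih d c t hl' hm' e5]

theorem cf_sub_one (a : ℕ) (t : List ℕ) : cf ((a + 1) :: t) = cf (a :: t) + 1 := by
  cases t with
  | nil => simp [cf]
  | cons b t => rw [cf_cons, cf_cons]; push_cast; ring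

theorem main_big (a b : ℕ) (l m : List ℕ) (ha : 2 ≤ a) (hl : ∀ x ∈ a :: l, 0 < x)
    (hm : ∀ x ∈ b :: m, 0 < x) (h : 1 / cf (a :: l) + 1 / cf (b :: m) = 1) :
    auxS (b :: m) = 4 - auxS (a :: l) := by
  obtain ⟨c, rfl⟩ : ∃ c, a = c + 1 := ⟨a - 1, by omega⟩
  have hl' : ∀ x ∈ c :: l, 0 < x := by
    intro x hx
    rcases List.mem_cons.1 hx with rfl | hx
    · omega
    · exact hl x (List.mem_cons_of_mem _ hx)
  have h1 := one_le_cf l c hl'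
  have h2 := one_le_cf m b hm
  have key : cf (b :: m) = cf (1 :: c :: l) := by
    rw [cf_cons]
    rw [cf_sub_one] at h
    push_cast
    have p1 : cf (c :: l) ≠ 0 := by linarith
    have p2 : cf (c :: l) + 1 ≠ 0 := by linarith
    have p3 : cf (b :: m) ≠ 0 := by linarith
    field_simp at h ⊢
    linarith
  have hp : ∀ x ∈ 1 :: c :: l, 0 < x := by
    intro x hx
    rcases List.mem_cons.1 hx with rfl | hx
    · omega
    · exact hl' x hx
  rw [auxS_unique m b 1 (c :: l) hm hp key, auxS_cons, auxS_cons, auxS_cons (c + 1)]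
  push_cast
  ring

theorem main_half (a b : ℕ) (l m : List ℕ) (ha : 2 ≤ cf (a :: l)) (hl : ∀ x ∈ a :: l, 0 < x)
    (hm : ∀ x ∈ b :: m, 0 < x) (h : 1 / cf (a :: l) + 1 / cf (b :: m) = 1) :
    auxS (b :: m) = 4 - auxS (a :: l) := by
  by_cases h2 : 2 ≤ a
  · exact main_big a b l m h2 hl hm h
  have ha1 : a = 1 := by
    have := hl a (by simp)
    omega
  subst ha1
  have e : cf (1 :: l) = cf [2] := by
    cases l with
    | nil => rw [cf_single] at ha; norm_num at ha
    | cons c t =>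
      rw [cf_cons] at ha ⊢
      have h1 := one_le_cf t c (fun x hx => hl x (List.mem_cons_of_mem _ hx))
      have x2 : 1 / cf (c :: t) ≤ 1 := by rw [div_le_one (by linarith)]; exact h1
      rw [cf_single]
      push_cast at ha ⊢
      linarith
  have hp : ∀ x ∈ [2], 0 < x := by simp
  rw [auxS_unique l 1 2 [] hl hp e]
  rw [e] at h
  exact main_big 2 b [] m le_rfl hp hm h

/-- for every rational `α` with `0 < α < 1`, `wt(1 - α) = -wt(α)`;
i.e. for any continued fraction expansion `[0, a₁, …, aₙ]` of `α` and any expansion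
`[0, b₁, …, b_m]` of `1 - α` (with positive partial quotients), the weights are
negatives of each other. -/
theorem wt_one_sub (α : ℚ) (h0 : 0 < α) (h1 : α < 1) (l m : List ℕ)
    (hl : ∀ x ∈ l, 0 < x) (hm : ∀ x ∈ m, 0 < x)
    (hcl : cf (0 :: l) = α) (hcm : cf (0 :: m) = 1 - α) :
    wtExp 0 m = -wtExp 0 l := by
  cases l with
  | nil => simp [cf] at hcl; linarith
  | cons a l =>
  cases m with
  | nil => simp [cf] at hcm; linarith
  | cons b m =>
  rw [cf_cons] at hcl hcm
  have x1 := one_le_cf l a hl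
  have y1 := one_le_cf m b hm
  push_cast at hcl hcm
  have hs : 1 / cf (a :: l) + 1 / cf (b :: m) = 1 := by linarith
  rw [wtExp_eq, wtExp_eq]
  by_cases hx : 2 ≤ cf (a :: l)
  · rw [main_half a b l m hx hl hm hs]; ring
  · have hy : 2 ≤ cf (b :: m) := by
      by_contra hy
      push Not at hx hy
      have q1 : 1 / 2 < 1 / cf (a :: l) := one_div_lt_one_div_of_lt (by linarith) hx
      have q2 : 1 / 2 < 1 / cf (b :: m) := one_div_lt_one_div_of_lt (by linarith) hy
      linarith
    rw [main_half b a m l hy hm hl (by linarith)]; ring
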